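/- Let X be a smooth extremal surface of degree q+1 in ℙ³(k). Then Aut(X) acts transitively on the set of ordered pairs of skew lines on X: for any skew lines L, L' on X and any skew lines M, M' on X, there exists g ∈ Aut(X) with g(L) = M and g(L') = M'. -/

import Mathlib

open Module

/-! Basic setup: `k` is an algebraically closed field of characteristic `p > 0`,
`q = p^e`.  We model ℙ³(k) via linear subspaces of `k⁴ = Fin 4 → k`:
points, lines and planes of ℙ³(k) are subspaces of dimension 1, 2 and 3
respectively.  A hypersurface cut out by a homogeneous form is recorded by its
affine cone in `k⁴`. -/

/-- The Frobenius form in 4 variables determined by a 4×4 matrix `A`: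
`∑ i j, A i j * x i ^ q * x j`, a homogeneous form of degree `q+1`. -/
def frobForm {k : Type*} [Field k] (q : ℕ) (A : Matrix (Fin 4) (Fin 4) k)
    (x : Fin 4 → k) : k :=
  ∑ i, ∑ j, A i j * x i ^ q * x j

/-- The affine cone in `k⁴` of the extremal surface in ℙ³(k) cut out by the
Frobenius form with matrix `A`; a point of ℙ³(k) lies on the surface iff its
homogeneous coordinate representatives lie in this set. -/
def extremalCone (k : Type*) [Field k] (q : ℕ) (A : Matrix (Fin 4) (Fin 4) k) :
    Set (Fin 4 → k) :=
  {x | frobForm q A x = 0}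

/-- A point of ℙ³(k): a 1-dimensional subspace of `k⁴`. -/
def IsPoint {k : Type*} [Field k] (c : Submodule k (Fin 4 → k)) : Prop :=
  finrank k c = 1

/-- A line of ℙ³(k): a 2-dimensional subspace of `k⁴`. -/
def IsLine {k : Type*} [Field k] (L : Submodule k (Fin 4 → k)) : Prop :=
  finrank k L = 2

/-- A plane of ℙ³(k): a 3-dimensional subspace of `k⁴`. -/
def IsPlane {k : Type*} [Field k] (H : Submodule k (Fin 4 → k)) : Prop :=
  finrank k H = 3

/-- `L` is a line lying on the surface with affine cone `X`. -/
def IsLineOn {k : Type*} [Field k] (X : Set (Fin 4 → k))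
    (L : Submodule k (Fin 4 → k)) : Prop :=
  IsLine L ∧ (L : Set (Fin 4 → k)) ⊆ X

/-- Two lines of ℙ³(k) meet iff the corresponding subspaces of `k⁴` intersect
nontrivially. -/
def MeetsLine {k : Type*} [Field k] (L M : Submodule k (Fin 4 → k)) : Prop :=
  L ⊓ M ≠ ⊥

/-- Two lines of ℙ³(k) are skew iff the corresponding subspaces of `k⁴`
intersect trivially. -/
def SkewLine {k : Type*} [Field k] (L M : Submodule k (Fin 4 → k)) : Prop :=
  L ⊓ M = ⊥

/-- `IsStarAt q X S c`: `S` is a star on the surface with affine cone `X`,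
centered at the point `c`, i.e. a set of `q+1` distinct lines on the surface
all passing through `c`. -/
def IsStarAt {k : Type*} [Field k] (q : ℕ) (X : Set (Fin 4 → k))
    (S : Set (Submodule k (Fin 4 → k))) (c : Submodule k (Fin 4 → k)) : Prop :=
  IsPoint c ∧ S.ncard = q + 1 ∧ ∀ L ∈ S, IsLineOn X L ∧ c ≤ L

/-- `S` is a star on the surface with affine cone `X`. -/
def IsStar {k : Type*} [Field k] (q : ℕ) (X : Set (Fin 4 → k))
    (S : Set (Submodule k (Fin 4 → k))) : Prop :=
  ∃ c, IsStarAt q X S c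

/-- `c` is a star point of the surface with affine cone `X`. -/
def IsStarPoint {k : Type*} [Field k] (q : ℕ) (X : Set (Fin 4 → k))
    (c : Submodule k (Fin 4 → k)) : Prop :=
  ∃ S, IsStarAt q X S c

/-- `H` is a star plane of the surface with affine cone `X`, centered at `c`:
the plane section `X ∩ H` is the union of a star centered at `c`. -/
def IsStarPlaneAt {k : Type*} [Field k] (q : ℕ) (X : Set (Fin 4 → k))
    (H c : Submodule k (Fin 4 → k)) : Prop :=
  IsPlane H ∧ ∃ S, IsStarAt q X S c ∧
    X ∩ (H : Set (Fin 4 → k)) = ⋃ L ∈ S, (L : Set (Fin 4 → k))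

/-- An element of `Aut(X)`: since every projective linear automorphism of
ℙ³(k) is represented by an invertible linear map of `k⁴` (uniquely up to
scalars, which act trivially on subspaces and preserve every cone), `g ∈
PGL(4,k)` with `g(X) = X` corresponds to a linear automorphism of `k⁴`
mapping the affine cone `X` onto itself. -/
def PreservesCone {k : Type*} [Field k] (X : Set (Fin 4 → k))
    (g : (Fin 4 → k) ≃ₗ[k] (Fin 4 → k)) : Prop :=
  (⇑g) '' X = X

/-!
Let `B` be the sesquilinear form with `X = {B x x = 0}`. Complementary isotropic subspaces `L` and
`L'` are their own orthogonal complements. The vectors `u` with `B x u = B u x ^ q` for all `x` are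
the fixed points of an injective `q²`-semilinear map `φ` that preserves `L`. Over an algebraically
closed field the fixed points of such a map span (Lang's theorem), so `L` has a basis of Hermitian
vectors `u`, and with the dual basis `w` of `L'` they satisfy `B uᵢ wⱼ = B wⱼ uᵢ = δᵢⱼ`. As the Gram
matrix is the same for every pair of skew lines, the linear map matching two such bases is an
isometry of `B`.

A single fixed vector is found on a cyclic subspace, where `φ^d v = ∑ aᵢ φ^i v`: being fixed is a
recursion on the coefficients that closes up to one polynomial equation in one unknown. A fixed
vector of `V ⧸ W`, where `W` is the span of the fixed vectors, then lifts to a fixed vector of `V`.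
-/

section Lang

open Polynomial

variable {k V : Type*} [Field k] [AddCommGroup V] [Module k V] {σ : k →+* k} {q : ℕ}

lemma exists_pow_eq_mul_add [IsAlgClosed k] (hq : 2 ≤ q) (a b : k) : ∃ t, t ^ q = a * t + b := by
  have hdeg : (X ^ q - (C a * X + C b)).degree = (q : WithBot ℕ) := by
    rw [degree_sub_eq_left_of_degree_lt, degree_X_pow]
    rw [degree_X_pow]
    exact degree_linear_lt.trans_le (mod_cast hq)
  obtain ⟨t, ht⟩ := IsAlgClosed.exists_root (X ^ q - (C a * X + C b))
    (by rw [hdeg]; exact_mod_cast (by lia : q ≠ 0))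
  refine ⟨t, sub_eq_zero.1 ?_⟩
  simpa using ht

lemma exists_linearIndepOn_range_and_mem_span [FiniteDimensional k V] (v : ℕ → V) :
    ∃ d, LinearIndepOn k v (Finset.range d) ∧ v d ∈ Submodule.span k (v '' Finset.range d) := by
  by_contra! h
  have hli (d : ℕ) : LinearIndepOn k v (Finset.range d) := by
    induction d with
    | zero => simp
    | succ d ih =>
      rw [Finset.range_add_one, Finset.coe_insert, linearIndepOn_insert (by simp)]
      exact ⟨ih, h d ih⟩
  have hcard := (hli (finrank k V + 1)).fintype_card_le_finrank
  simp at hcard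

/-- The polynomials `γᵢ(X)` with `γ₀ = 0` and `γᵢ₊₁ = γᵢ ^ q + aᵢ X`. If `φ` is `q`-semilinear and
`φ^d v = ∑ aᵢ φ^i v`, then `∑ γᵢ₊₁(s) φ^i v` is fixed by `φ` as soon as `γ_d(s) ^ q = s`. -/
noncomputable def fixedVectorCoeff (q : ℕ) (a : ℕ → k) : ℕ → k[X]
  | 0 => 0
  | i + 1 => fixedVectorCoeff q a i ^ q + C (a i) * X

lemma X_dvd_fixedVectorCoeff (hq : q ≠ 0) (a : ℕ → k) (i : ℕ) : X ∣ fixedVectorCoeff q a i := by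
  induction i with
  | zero => exact dvd_zero X
  | succ i ih => exact dvd_add (dvd_pow ih hq) (dvd_mul_left X _)

lemma X_sq_dvd_fixedVectorCoeff_pow (hq : 2 ≤ q) (a : ℕ → k) (i : ℕ) :
    X ^ 2 ∣ fixedVectorCoeff q a i ^ q :=
  (pow_dvd_pow_of_dvd (X_dvd_fixedVectorCoeff (by lia) a i) 2).trans (pow_dvd_pow _ hq)

lemma eq_zero_of_fixedVectorCoeff_eq_zero (hq : 2 ≤ q) {a : ℕ → k} {d : ℕ}
    (h : fixedVectorCoeff q a d = 0) : ∀ i < d, a i = 0 := by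
  induction d with
  | zero => simp
  | succ d ih =>
    have hX := X_sq_dvd_fixedVectorCoeff_pow hq a d
    have hcoeff := congrArg (coeff · 1) h
    have ha : a d = 0 := by
      simpa [fixedVectorCoeff, X_pow_dvd_iff.1 hX 1 one_lt_two] using hcoeff
    have hd : fixedVectorCoeff q a d = 0 :=
      eq_zero_of_pow_eq_zero (n := q) (by simpa [fixedVectorCoeff, ha] using h)
    intro i hi
    obtain hi | rfl := Nat.lt_succ_iff_lt_or_eq.1 hi
    exacts [ih hd i hi, ha]

lemma exists_ne_zero_eval_fixedVectorCoeff_pow_eq [IsAlgClosed k] (hq : 2 ≤ q) {a : ℕ → k} {d : ℕ}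
    (ha : ∃ i < d, a i ≠ 0) : ∃ s ≠ 0, (fixedVectorCoeff q a d).eval s ^ q = s := by
  have hne : fixedVectorCoeff q a d ^ q ≠ 0 := fun h ↦ by
    obtain ⟨i, hi, hai⟩ := ha
    exact hai (eq_zero_of_fixedVectorCoeff_eq_zero hq (eq_zero_of_pow_eq_zero h) i hi)
  obtain ⟨r, hr⟩ := X_sq_dvd_fixedVectorCoeff_pow hq a d
  have hdeg : (X * r - 1).degree ≠ 0 := by
    have hr0 : r ≠ 0 := by rintro rfl; simp_all
    have hpos : 0 < (X * r).degree := by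
      rw [← natDegree_pos_iff_degree_pos, natDegree_X_mul hr0]
      lia
    rw [degree_sub_eq_left_of_degree_lt (by simpa using hpos)]
    exact hpos.ne'
  obtain ⟨s, hs⟩ := IsAlgClosed.exists_root _ hdeg
  have hs : s * r.eval s = 1 := by simpa [sub_eq_zero] using hs
  refine ⟨s, left_ne_zero_of_mul_eq_one hs, ?_⟩
  calc (fixedVectorCoeff q a d).eval s ^ q = (X ^ 2 * r).eval s := by rw [← hr, eval_pow]
    _ = s * (s * r.eval s) := by simp only [eval_mul, eval_pow, eval_X]; ring
    _ = s := by rw [hs, mul_one]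

lemma map_sum_fixedVectorCoeff (hσ : ∀ x, σ x = x ^ q) (hq : q ≠ 0) (φ : V →ₛₗ[σ] V) {v : V}
    {a : ℕ → k} {d : ℕ} (hv : φ^[d] v = ∑ i ∈ Finset.range d, a i • φ^[i] v) {s : k}
    (hs : (fixedVectorCoeff q a d).eval s ^ q = s) :
    φ (∑ i ∈ Finset.range d, (fixedVectorCoeff q a (i + 1)).eval s • φ^[i] v) =
      ∑ i ∈ Finset.range d, (fixedVectorCoeff q a (i + 1)).eval s • φ^[i] v := by
  set γ : ℕ → k := fun i ↦ (fixedVectorCoeff q a i).eval s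
  have hγ_zero : γ 0 ^ q = 0 := by simp [γ, fixedVectorCoeff, hq]
  have hγ_succ (i : ℕ) : γ (i + 1) = γ i ^ q + s * a i := by
    simp [γ, fixedVectorCoeff, mul_comm s]
  calc φ (∑ i ∈ Finset.range d, γ (i + 1) • φ^[i] v)
      = ∑ i ∈ Finset.range d, γ (i + 1) ^ q • φ^[i + 1] v := by
        simp only [map_sum, map_smulₛₗ, hσ, Function.iterate_succ_apply']
    _ = ∑ i ∈ Finset.range (d + 1), γ i ^ q • φ^[i] v := by
        rw [Finset.sum_range_succ', hγ_zero, zero_smul, add_zero]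
    _ = ∑ i ∈ Finset.range d, γ i ^ q • φ^[i] v + s • φ^[d] v := by
        rw [Finset.sum_range_succ, hs]
    _ = ∑ i ∈ Finset.range d, γ (i + 1) • φ^[i] v := by
        simp only [hv, hγ_succ, add_smul, Finset.sum_add_distrib, Finset.smul_sum, mul_smul]

lemma exists_mem_span_fixed_map_eq_smul_add [IsAlgClosed k] (hσ : ∀ x, σ x = x ^ q) (hq : 2 ≤ q)
    (φ : V →ₛₗ[σ] V) (a : k) {x : V} (hx : x ∈ Submodule.span k {w | φ w = w}) :
    ∃ y ∈ Submodule.span k {w | φ w = w}, φ y = a • y + x := by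
  induction hx using Submodule.closure_induction with
  | zero => exact ⟨0, zero_mem _, by simp⟩
  | add x₁ x₂ _ _ ih₁ ih₂ =>
    obtain ⟨⟨y₁, hy₁, h₁⟩, y₂, hy₂, h₂⟩ := And.intro ih₁ ih₂
    refine ⟨y₁ + y₂, add_mem hy₁ hy₂, ?_⟩
    rw [map_add, h₁, h₂]
    module
  | smul_mem c w hw =>
    obtain ⟨t, ht⟩ := exists_pow_eq_mul_add hq a c
    refine ⟨t • w, Submodule.smul_mem _ _ (Submodule.subset_span hw), ?_⟩
    rw [map_smulₛₗ, hσ, ht, hw, add_smul, mul_smul]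

variable [IsAlgClosed k] [FiniteDimensional k V]

lemma exists_ne_zero_map_eq_self [Nontrivial V] (hσ : ∀ x, σ x = x ^ q) (hq : 2 ≤ q)
    {φ : V →ₛₗ[σ] V} (hφ : Function.Injective φ) : ∃ w ≠ 0, φ w = w := by
  obtain ⟨v, hv⟩ := exists_ne (0 : V)
  obtain ⟨d, hli, hd⟩ := exists_linearIndepOn_range_and_mem_span (k := k) (φ^[·] v)
  obtain ⟨a, ha⟩ : ∃ a : ℕ → k, ∑ i ∈ Finset.range d, a i • φ^[i] v = φ^[d] v :=
    (Submodule.mem_span_image_finset_iff_exists_fun' k).1 hd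
  have hd_ne : φ^[d] v ≠ 0 := by
    rw [← iterate_map_zero φ d]
    exact (hφ.iterate d).ne hv
  obtain ⟨i, hi, hai⟩ : ∃ i < d, a i ≠ 0 := by
    by_contra! h
    refine hd_ne (ha ▸ Finset.sum_eq_zero fun i hi ↦ ?_)
    rw [h i (Finset.mem_range.1 hi), zero_smul]
  obtain ⟨s, hs0, hs⟩ := exists_ne_zero_eval_fixedVectorCoeff_pow_eq hq ⟨i, hi, hai⟩
  refine ⟨_, fun hw ↦ hs0 ?_, map_sum_fixedVectorCoeff hσ (by lia) φ ha.symm hs⟩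
  have hγ := linearIndepOn_finset_iff.1 hli _ hw (d - 1) (Finset.mem_range.2 (by lia))
  rw [← hs, ← Nat.sub_add_cancel (by lia : 1 ≤ d), hγ, zero_pow (by lia)]

theorem span_fixed_eq_top (hσ : ∀ x, σ x = x ^ q) (hq : 2 ≤ q) {φ : V →ₛₗ[σ] V}
    (hφ : Function.Injective φ) : Submodule.span k {w | φ w = w} = ⊤ := by
  set W := Submodule.span k {w | φ w = w}
  by_contra hW
  have := Submodule.Quotient.nontrivial_iff.2 hW
  have hWφ : W ≤ W.comap φ := Submodule.span_le.2 fun w (hw : φ w = w) ↦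
    Submodule.mem_comap.2 (hw.symm ▸ Submodule.subset_span hw)
  have hinj : Function.Injective (W.mapQ W φ hWφ) := by
    rw [injective_iff_map_eq_zero]
    intro z hz
    induction z using Submodule.Quotient.induction_on with | _ v
    rw [Submodule.mapQ_apply, Submodule.Quotient.mk_eq_zero] at hz
    obtain ⟨y, hy, hφy⟩ := exists_mem_span_fixed_map_eq_smul_add hσ hq φ 0 hz
    rw [zero_smul, zero_add] at hφy
    exact (Submodule.Quotient.mk_eq_zero W).2 (hφ hφy ▸ hy)
  obtain ⟨z, hz0, hz⟩ := exists_ne_zero_map_eq_self hσ hq hinj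
  induction z using Submodule.Quotient.induction_on with | _ v
  rw [Submodule.mapQ_apply, Submodule.Quotient.eq] at hz
  obtain ⟨y, hy, hφy⟩ := exists_mem_span_fixed_map_eq_smul_add hσ hq φ 1 hz
  -- Subtracting `y` turns the lift `v` of a fixed vector of `V ⧸ W` into a fixed vector of `V`.
  have hfix : φ (v - y) = v - y := by
    rw [map_sub, hφy]
    module
  have hv : v ∈ W := (Submodule.sub_mem_iff_left W hy).1 (Submodule.subset_span hfix)
  exact hz0 ((Submodule.Quotient.mk_eq_zero W).2 hv)

theorem exists_basis_map_eq_self (hσ : ∀ x, σ x = x ^ q) (hq : 2 ≤ q) {φ : V →ₛₗ[σ] V}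
    (hφ : Function.Injective φ) : ∃ u : Basis (Fin (finrank k V)) k V, ∀ i, φ (u i) = u i := by
  obtain ⟨u, hu, hspan, hli⟩ := Submodule.exists_fun_fin_finrank_span_eq k {w | φ w = w}
  have htop := span_fixed_eq_top hσ hq hφ
  have hfin := (congrArg (fun W : Submodule k V ↦ finrank k W) htop).trans (finrank_top k V)
  refine ⟨(Basis.mk hli (hspan.trans htop).ge).reindex (finCongr hfin), fun i ↦ ?_⟩
  simpa using hu _

end Lang

section SesquilinearForm

open LinearMap Submodule

variable {k V : Type*} [Field k] [AddCommGroup V] [Module k V] {σ : k →+* k} {q : ℕ}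
  {B : V →ₛₗ[σ] V →ₗ[k] k} {L L' : Submodule k V}

/-- The cone of isotropic vectors of a sesquilinear form: the affine cone over the hypersurface
`B x x = 0`. -/
def nullCone (B : V →ₛₗ[σ] V →ₗ[k] k) : Set V := {x | B x x = 0}

lemma image_nullCone_eq (g : V ≃ₗ[k] V) (hg : ∀ x y, B (g x) (g y) = B x y) :
    g '' nullCone B = nullCone B := by
  ext y
  obtain ⟨x, rfl⟩ := g.surjective y
  simp [nullCone, hg]

lemma le_orthogonalBilin_of_subset_nullCone [IsAlgClosed k] (hσ : ∀ x, σ x = x ^ q) (hq : 2 ≤ q)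
    (hL : (L : Set V) ⊆ nullCone B) : L ≤ L.orthogonalBilin B := by
  refine fun y hy ↦ mem_orthogonalBilin_iff.2 fun x hx ↦ ?_
  obtain ⟨t, ht⟩ := exists_pow_eq_mul_add hq (1 : k) 1
  have hpolar (s : k) : s ^ q * B x y + s * B y x = 0 := by
    have h : B (s • x + y) (s • x + y) = 0 := hL (add_mem (L.smul_mem s hx) hy)
    have hxx : B x x = 0 := hL hx
    have hyy : B y y = 0 := hL hy
    simpa [hσ, hxx, hyy, add_comm] using h
  have h₁ := hpolar 1
  have ht := ht ▸ hpolar t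
  linear_combination ht - t * h₁

lemma orthogonalBilin_eq_self_of_subset_nullCone [IsAlgClosed k] (hσ : ∀ x, σ x = x ^ q)
    (hq : 2 ≤ q) (hB : B.SeparatingRight) (hL : (L : Set V) ⊆ nullCone B)
    (hL' : (L' : Set V) ⊆ nullCone B) (h : IsCompl L L') : L.orthogonalBilin B = L := by
  replace hL := le_orthogonalBilin_of_subset_nullCone hσ hq hL
  replace hL' := le_orthogonalBilin_of_subset_nullCone hσ hq hL'
  have hdisj : Disjoint (L.orthogonalBilin B) L' := by
    refine disjoint_def.2 fun y hy hy' ↦ hB y fun x ↦ ?_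
    obtain ⟨a, ha, b, hb, rfl⟩ := mem_sup.1 (h.sup_eq_top ▸ mem_top : x ∈ L ⊔ L')
    rw [map_add, LinearMap.add_apply, hy a ha, hL' hy' b hb, add_zero]
  exact (eq_of_le_of_inf_le_of_sup_le hL (hdisj.eq_bot.trans_le bot_le)
    (le_top.trans h.sup_eq_top.ge)).symm

lemma injective_pi_apply_domRestrict {ι : Type*} (hL : L.orthogonalBilin B ≤ L)
    (h : Disjoint L L') (u : Basis ι k L) :
    Function.Injective (LinearMap.pi fun i ↦ (B (u i)).domRestrict L') := by
  refine (injective_iff_map_eq_zero _).2 fun y hy ↦ ?_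
  have hB : (B.flip y).domRestrict L = 0 := u.ext fun i ↦ congrFun hy i
  have hyL : (y : V) ∈ L := hL fun x hx ↦ congr($hB ⟨x, hx⟩)
  exact Subtype.ext (disjoint_def.1 h y hyL y.2)

/-- A hyperbolic basis of `B`: a basis `u₁, …, uₙ, w₁, …, wₙ` with `B uᵢ wᵢ = B wᵢ uᵢ = 1`, all
other values of `B` on basis vectors being `0`. -/
def IsHyperbolicBasis {ι : Type*} [DecidableEq ι] (B : V →ₛₗ[σ] V →ₗ[k] k)
    (b : Basis (ι ⊕ ι) k V) : Prop :=
  ∀ i j, B (b i) (b j) = if i.swap = j then 1 else 0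

lemma IsHyperbolicBasis.apply_equiv {ι : Type*} [DecidableEq ι] {b c : Basis (ι ⊕ ι) k V}
    (hb : IsHyperbolicBasis B b) (hc : IsHyperbolicBasis B c) (x y : V) :
    B (b.equiv c (Equiv.refl _) x) (b.equiv c (Equiv.refl _) y) = B x y := by
  let g : V →ₗ[k] V := b.equiv c (Equiv.refl _)
  have hg : (B ∘ₛₗ g).compl₂ g = B := ext_basis b b fun i j ↦ by simp [g, hb i j, hc i j]
  exact congr($hg x y)

lemma map_equiv_span_range_comp {ι κ : Type*} (b c : Basis ι k V) (f : κ → ι) :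
    (span k (Set.range (b ∘ f))).map (b.equiv c (Equiv.refl _) : V →ₗ[k] V) =
      span k (Set.range (c ∘ f)) := by
  rw [Submodule.map_span, ← Set.range_comp]
  congr 2
  ext i
  simp

variable [FiniteDimensional k V]

lemma exists_forall_apply_eq (hB : B.SeparatingRight) (f : V →ₛₗ[σ] k) :
    ∃ y, ∀ x, B x y = f x := by
  let b := finBasis k V
  have hinj : Function.Injective (LinearMap.pi fun i ↦ B (b i)) := by
    refine (injective_iff_map_eq_zero _).2 fun y hy ↦ hB y fun x ↦ ?_
    have hy : B.flip y = 0 := b.ext fun i ↦ congrFun hy i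
    exact congr($hy x)
  have hsurj := (injective_iff_surjective_of_finrank_eq_finrank (by simp)).1 hinj
  obtain ⟨y, hy⟩ := hsurj fun i ↦ f (b i)
  have hy : B.flip y = f := b.ext fun i ↦ congrFun hy i
  exact ⟨y, fun x ↦ congr($hy x)⟩

lemma separatingLeft_of_separatingRight (hB : B.SeparatingRight) : B.SeparatingLeft := by
  intro u hu
  refine (forall_dual_apply_eq_zero_iff k u).1 fun f ↦ ?_
  obtain ⟨y, hy⟩ := exists_forall_apply_eq hB (σ.toSemilinearMap.comp f)
  exact (map_eq_zero σ).1 ((hy u).symm.trans (hu y))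

lemma exists_semilinearMap_apply_eq (hB : B.SeparatingRight) :
    ∃ φ : V →ₛₗ[σ.comp σ] V, ∀ x u, B x (φ u) = σ (B u x) := by
  choose φ hφ using fun u ↦ exists_forall_apply_eq hB (σ.toSemilinearMap.comp (B u))
  have hφ (x u) : B x (φ u) = σ (B u x) := hφ u x
  have hext {y z : V} (h : ∀ x, B x y = B x z) : y = z :=
    sub_eq_zero.1 (hB _ fun x ↦ by rw [map_sub, h, sub_self])
  refine ⟨⟨⟨φ, fun u v ↦ hext fun x ↦ ?_⟩, fun c u ↦ hext fun x ↦ ?_⟩, hφ⟩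
  · simp [hφ]
  · simp [hφ]

/-- `u` is a Hermitian vector of `B` if `B x u` is the conjugate `σ (B u x)` of `B u x` for all `x`.
When `σ` is the `q`-th power map, such vectors form an `𝔽_{q²}`-structure on which `B` is an honest
Hermitian form. -/
def IsHermitianVector (B : V →ₛₗ[σ] V →ₗ[k] k) (u : V) : Prop := ∀ x, B x u = σ (B u x)

theorem exists_basis_isHermitianVector [IsAlgClosed k] (hσ : ∀ x, σ x = x ^ q) (hq : 2 ≤ q)
    (hB : B.SeparatingRight) (hL : L.orthogonalBilin B = L) :
    ∃ u : Basis (Fin (finrank k L)) k L, ∀ i, IsHermitianVector B (u i : V) := by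
  obtain ⟨φ, hφ⟩ := exists_semilinearMap_apply_eq hB
  have hφ_inj : Function.Injective φ := by
    refine (injective_iff_map_eq_zero φ).2 fun u hu ↦
      separatingLeft_of_separatingRight hB u fun x ↦ (map_eq_zero σ).1 ?_
    rw [← hφ, hu, map_zero]
  have hφL (u : L) : φ u ∈ L := by
    refine hL.le (mem_orthogonalBilin_iff.2 fun x hx ↦ ?_)
    have hux : B u x = 0 := hL.ge hx u u.2
    rw [hφ, hux, map_zero]
  have hσσ (x : k) : σ.comp σ x = x ^ (q * q) := by simp [hσ, pow_mul]
  obtain ⟨u, hu⟩ := exists_basis_map_eq_self hσσ (by nlinarith)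
    (φ := (φ.domRestrict L).codRestrict L hφL) fun x y h ↦ Subtype.ext (hφ_inj congr(($h : V)))
  refine ⟨u, fun i x ↦ ?_⟩
  rw [← hφ]
  exact congr(B x $(congr(($(hu i) : V)))).symm

lemma finrank_le_finrank_of_disjoint (hL : L.orthogonalBilin B ≤ L) (h : Disjoint L L') :
    finrank k L' ≤ finrank k L := by
  simpa using finrank_le_finrank_of_injective (injective_pi_apply_domRestrict hL h (finBasis k L))

lemma two_mul_finrank_of_isCompl (hL : L.orthogonalBilin B ≤ L) (hL' : L'.orthogonalBilin B ≤ L')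
    (h : IsCompl L L') : 2 * finrank k L = finrank k V := by
  have hle := finrank_le_finrank_of_disjoint hL h.disjoint
  have hge := finrank_le_finrank_of_disjoint hL' h.disjoint.symm
  rw [← finrank_add_eq_of_isCompl h]
  lia

lemma exists_dual_basis {ι : Type*} [Finite ι] [DecidableEq ι] (hL : L.orthogonalBilin B ≤ L)
    (hL' : L'.orthogonalBilin B ≤ L') (h : Disjoint L L') (u : Basis ι k L) :
    ∃ w : Basis ι k L', ∀ i j, B (u i) (w j) = if i = j then 1 else 0 := by
  have := Fintype.ofFinite ι
  have hinj := injective_pi_apply_domRestrict hL h u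
  have hfin : finrank k L' = finrank k (ι → k) := by
    rw [finrank_fintype_fun_eq_card, ← finrank_eq_card_basis u]
    exact (finrank_le_finrank_of_disjoint hL h).antisymm
      (finrank_le_finrank_of_disjoint hL' h.symm)
  let E := LinearEquiv.ofInjectiveOfFinrankEq _ hinj hfin
  refine ⟨Basis.ofEquivFun E, fun i j ↦ ?_⟩
  have hE : E (Basis.ofEquivFun E j) = Pi.single j 1 := by simp
  exact (congrFun hE i).trans (Pi.single_apply j 1 i)

theorem exists_isHyperbolicBasis [IsAlgClosed k] (hσ : ∀ x, σ x = x ^ q) (hq : 2 ≤ q)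
    (hB : B.SeparatingRight) (hL : (L : Set V) ⊆ nullCone B) (hL' : (L' : Set V) ⊆ nullCone B)
    (h : IsCompl L L') {n : ℕ} (hn : finrank k V = 2 * n) :
    ∃ b : Basis (Fin n ⊕ Fin n) k V, IsHyperbolicBasis B b ∧
      span k (Set.range (b ∘ Sum.inl)) = L ∧ span k (Set.range (b ∘ Sum.inr)) = L' := by
  have hL_orth := orthogonalBilin_eq_self_of_subset_nullCone hσ hq hB hL hL' h
  have hL'_orth := orthogonalBilin_eq_self_of_subset_nullCone hσ hq hB hL' hL h.symm
  obtain rfl : finrank k L = n := by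
    have := two_mul_finrank_of_isCompl hL_orth.le hL'_orth.le h
    lia
  obtain ⟨u, hu⟩ := exists_basis_isHermitianVector hσ hq hB hL_orth
  obtain ⟨w, huw⟩ := exists_dual_basis hL_orth.le hL'_orth.le h.disjoint u
  let b := (u.prod w).map (L.prodEquivOfIsCompl L' h)
  have hbl (i) : b (Sum.inl i) = u i := by simp [b]
  have hbr (i) : b (Sum.inr i) = w i := by simp [b]
  refine ⟨b, ?_, ?_, ?_⟩
  · rintro (i | i) (j | j)
    · simpa [hbl] using hL_orth.ge (u j).2 (u i) (u i).2
    · simpa [hbl, hbr] using huw i j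
    · rw [hbl, hbr, hu, huw]
      simp [eq_comm, apply_ite σ]
    · simpa [hbr] using hL'_orth.ge (w j).2 (w i) (w i).2
  · rw [show b ∘ Sum.inl = L.subtype ∘ u from funext hbl, Set.range_comp, span_image, u.span_eq,
      map_subtype_top]
  · rw [show b ∘ Sum.inr = L'.subtype ∘ w from funext hbr, Set.range_comp, span_image, w.span_eq,
      map_subtype_top]

theorem aut_transitive_on_skew_pairs_general [IsAlgClosed k] {M M' : Submodule k V}
    (hσ : ∀ x, σ x = x ^ q) (hq : 2 ≤ q) (hB : B.SeparatingRight)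
    (hL : (L : Set V) ⊆ nullCone B) (hL' : (L' : Set V) ⊆ nullCone B) (hLL' : IsCompl L L')
    (hM : (M : Set V) ⊆ nullCone B) (hM' : (M' : Set V) ⊆ nullCone B) (hMM' : IsCompl M M') :
    ∃ g : V ≃ₗ[k] V, g '' nullCone B = nullCone B ∧
      L.map (g : V →ₗ[k] V) = M ∧ L'.map (g : V →ₗ[k] V) = M' := by
  have hL_orth := orthogonalBilin_eq_self_of_subset_nullCone hσ hq hB hL hL' hLL'
  have hL'_orth := orthogonalBilin_eq_self_of_subset_nullCone hσ hq hB hL' hL hLL'.symm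
  obtain ⟨n, hn⟩ : ∃ n, finrank k V = 2 * n :=
    ⟨_, (two_mul_finrank_of_isCompl hL_orth.le hL'_orth.le hLL').symm⟩
  obtain ⟨b, hb, hbL, hbL'⟩ := exists_isHyperbolicBasis hσ hq hB hL hL' hLL' hn
  obtain ⟨c, hc, hcM, hcM'⟩ := exists_isHyperbolicBasis hσ hq hB hM hM' hMM' hn
  refine ⟨b.equiv c (Equiv.refl _), image_nullCone_eq _ (hb.apply_equiv hc), ?_, ?_⟩
  · rw [← hbL, ← hcM, map_equiv_span_range_comp]
  · rw [← hbL', ← hcM', map_equiv_span_range_comp]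

end SesquilinearForm

section FrobeniusForm

variable {k : Type*} [Field k]

lemma separatingRight_toLinearMapₛₗ₂' {n : Type*} [Fintype n] [DecidableEq n] (σ : k →+* k)
    {A : Matrix n n k} (hA : IsUnit A) :
    (A.toLinearMapₛₗ₂' k σ (RingHom.id k)).SeparatingRight := by
  intro y hy
  refine Matrix.mulVec_injective_iff_isUnit.2 hA ?_
  ext i
  simpa [Matrix.toLinearMapₛₗ₂'_apply, Matrix.mulVec, dotProduct, Pi.single_apply, mul_comm] using
    hy (Pi.single i 1)

lemma extremalCone_eq_nullCone {σ : k →+* k} {q : ℕ} (hσ : ∀ x, σ x = x ^ q)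
    (A : Matrix (Fin 4) (Fin 4) k) :
    extremalCone k q A = nullCone (A.toLinearMapₛₗ₂' k σ (RingHom.id k)) := by
  ext x
  simp [extremalCone, nullCone, frobForm, Matrix.toLinearMapₛₗ₂'_apply, hσ, mul_assoc,
    mul_comm, mul_left_comm]

lemma SkewLine.isCompl {L M : Submodule k (Fin 4 → k)} (h : SkewLine L M) (hL : IsLine L)
    (hM : IsLine M) : IsCompl L M := by
  refine (Submodule.isCompl_iff_disjoint L M ?_).2 (disjoint_iff.2 h)
  rw [IsLine] at hL hM
  simp [hL, hM]

end FrobeniusForm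

/-- `Aut(X)` acts transitively on ordered pairs of skew
lines on a smooth extremal surface `X` of degree `q+1`: for skew lines
`L, L'` on `X` and skew lines `M, M'` on `X` there is `g ∈ Aut(X)`
(represented by an invertible linear map of `k⁴` preserving the affine cone
of `X`) with `g(L) = M` and `g(L') = M'`. -/
theorem aut_transitive_on_skew_pairs {k : Type*} [Field k] [IsAlgClosed k]
    (p e q : ℕ) (hp : p.Prime) (hchar : CharP k p) (he : 1 ≤ e) (hq : q = p ^ e)
    (A : Matrix (Fin 4) (Fin 4) k) (hA : IsUnit A)
    (L L' M M' : Submodule k (Fin 4 → k))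
    (hL : IsLineOn (extremalCone k q A) L) (hL' : IsLineOn (extremalCone k q A) L')
    (hM : IsLineOn (extremalCone k q A) M) (hM' : IsLineOn (extremalCone k q A) M')
    (hLL' : SkewLine L L') (hMM' : SkewLine M M') :
    ∃ g : (Fin 4 → k) ≃ₗ[k] (Fin 4 → k),
      PreservesCone (extremalCone k q A) g ∧
        Submodule.map (g : (Fin 4 → k) →ₗ[k] (Fin 4 → k)) L = M ∧
        Submodule.map (g : (Fin 4 → k) →ₗ[k] (Fin 4 → k)) L' = M' := by
  have := Fact.mk hp
  have : ExpChar k p := ExpChar.prime hp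
  have hσ (x : k) : iterateFrobenius k p e x = x ^ q := hq ▸ iterateFrobenius_def p e x
  have hq2 : 2 ≤ q := hq ▸ hp.two_le.trans (Nat.le_self_pow (by lia) p)
  rw [extremalCone_eq_nullCone hσ] at *
  exact aut_transitive_on_skew_pairs_general hσ hq2 (separatingRight_toLinearMapₛₗ₂' _ hA)
    hL.2 hL'.2 (hLL'.isCompl hL.1 hL'.1) hM.2 hM'.2 (hMM'.isCompl hM.1 hM'.1)
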